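/- The denominator of the aligned rank statistic satisfies the identity x₀ᵀ(I − H)x₀ = (1/n₁ + 1/n₂)⁻¹ · [1 − (1/n₁ + 1/n₂)⁻¹ · (x̄₁ − x̄₂)ᵀ(XᵀX)⁻¹(x̄₁ − x̄₂)]. -/

import Mathlib

open Matrix Finset

/-!
Let `w` be the vector with entries `1 / n₁` on the first group and `-1 / n₂` on the second. Pairing
a column with `w` takes the difference of its two group means, so `Xᵀ w = x̄₁ - x̄₂`, while
`wᵀ w = 1 / n₁ + 1 / n₂`. Since `x₀ = (1 / n₁ + 1 / n₂)⁻¹ w`, the identity is the expansion of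
`wᵀ (1 - X M Xᵀ) w = wᵀ w - (Xᵀ w)ᵀ M (Xᵀ w)`, which holds for every matrix `M` in place of
`(Xᵀ X)⁻¹`.
-/

section QuadraticForm

variable {R m n : Type*} [CommRing R] [Fintype m] [Fintype n] [DecidableEq m]

theorem dotProduct_one_sub_mul_mul_transpose_mulVec (X : Matrix m n R) (M : Matrix n n R)
    (v w : m → R) :
    v ⬝ᵥ ((1 - X * M * Xᵀ) *ᵥ w) = v ⬝ᵥ w - (Xᵀ *ᵥ v) ⬝ᵥ (M *ᵥ (Xᵀ *ᵥ w)) := by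
  rw [sub_mulVec, one_mulVec, dotProduct_sub, ← mulVec_mulVec, ← mulVec_mulVec,
    dotProduct_mulVec, ← mulVec_transpose]

end QuadraticForm

/-- The column means of a matrix whose rows are the observations (zero when there are
no rows). -/
def colMean {K m n : Type*} [Field K] [Fintype m] (A : Matrix m n K) : n → K :=
  fun k => (∑ i, A i k) / Fintype.card m

section TwoGroups

variable (K m₁ m₂ : Type*) {n : Type*} [Field K] [Fintype m₁] [Fintype m₂]

/-- The contrast that pairs with a vector of observations to give the mean over the first group
minus the mean over the second. -/
def meanContrast : m₁ ⊕ m₂ → K :=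
  Sum.elim (fun _ => 1 / (Fintype.card m₁ : K)) (fun _ => -(1 / (Fintype.card m₂ : K)))

/-- The vector `x₀` of the aligned rank statistic: the indicator of the first group minus its
mean `n₁ / (n₁ + n₂)`. -/
def centeredGroupIndicator : m₁ ⊕ m₂ → K :=
  Sum.elim (fun _ => (Fintype.card m₂ : K) / (Fintype.card m₁ + Fintype.card m₂))
    (fun _ => -(Fintype.card m₁ : K) / (Fintype.card m₁ + Fintype.card m₂))

variable {K m₁ m₂}

theorem transpose_fromRows_mulVec_meanContrast (X₁ : Matrix m₁ n K) (X₂ : Matrix m₂ n K) :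
    (fromRows X₁ X₂)ᵀ *ᵥ meanContrast K m₁ m₂ = colMean X₁ - colMean X₂ := by
  ext k
  simp [meanContrast, colMean, mulVec, dotProduct, div_eq_mul_inv, sum_mul, sub_eq_add_neg]

theorem meanContrast_dotProduct_self [CharZero K] [Nonempty m₁] [Nonempty m₂] :
    meanContrast K m₁ m₂ ⬝ᵥ meanContrast K m₁ m₂ =
      1 / (Fintype.card m₁ : K) + 1 / (Fintype.card m₂ : K) := by
  simp [meanContrast, dotProduct]

theorem centeredGroupIndicator_eq_smul_meanContrast [CharZero K] [Nonempty m₁] [Nonempty m₂] :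
    centeredGroupIndicator K m₁ m₂ =
      (1 / (Fintype.card m₁ : K) + 1 / (Fintype.card m₂ : K))⁻¹ • meanContrast K m₁ m₂ := by
  have hm₁ : (Fintype.card m₁ : K) ≠ 0 := Nat.cast_ne_zero.2 Fintype.card_ne_zero
  have hm₂ : (Fintype.card m₂ : K) ≠ 0 := Nat.cast_ne_zero.2 Fintype.card_ne_zero
  ext (i | j) <;>
  · simp only [centeredGroupIndicator, meanContrast, Sum.elim_inl, Sum.elim_inr, Pi.smul_apply,
      smul_eq_mul]
    field_simp
    ring

theorem stmt_4_general [Fintype n] [DecidableEq m₁] [DecidableEq m₂] [CharZero K]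
    [Nonempty m₁] [Nonempty m₂] (X₁ : Matrix m₁ n K) (X₂ : Matrix m₂ n K) (M : Matrix n n K) :
    centeredGroupIndicator K m₁ m₂ ⬝ᵥ
        ((1 - fromRows X₁ X₂ * M * (fromRows X₁ X₂)ᵀ) *ᵥ centeredGroupIndicator K m₁ m₂) =
      (1 / (Fintype.card m₁ : K) + 1 / (Fintype.card m₂ : K))⁻¹ *
        (1 - (1 / (Fintype.card m₁ : K) + 1 / (Fintype.card m₂ : K))⁻¹ *
          ((colMean X₁ - colMean X₂) ⬝ᵥ (M *ᵥ (colMean X₁ - colMean X₂)))) := by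
  have hne : 1 / (Fintype.card m₁ : K) + 1 / (Fintype.card m₂ : K) ≠ 0 := by
    have hℚ : 1 / (Fintype.card m₁ : ℚ) + 1 / (Fintype.card m₂ : ℚ) ≠ 0 := by positivity
    simpa using (Rat.cast_ne_zero (α := K)).2 hℚ
  rw [centeredGroupIndicator_eq_smul_meanContrast, mulVec_smul, smul_dotProduct, dotProduct_smul,
    dotProduct_one_sub_mul_mul_transpose_mulVec, meanContrast_dotProduct_self,
    transpose_fromRows_mulVec_meanContrast, smul_eq_mul, smul_eq_mul, mul_sub,
    inv_mul_cancel₀ hne]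

end TwoGroups

/-- The denominator of the aligned rank statistic satisfies
`x₀ᵀ(I − H)x₀ = (1/n₁ + 1/n₂)⁻¹ · [1 − (1/n₁ + 1/n₂)⁻¹ · (x̄₁ − x̄₂)ᵀ(XᵀX)⁻¹(x̄₁ − x̄₂)]`. -/
theorem stmt_4 (n₁ n₂ p : ℕ) (hn₁ : 0 < n₁) (hn₂ : 0 < n₂) (hp : 0 < p)
    (X₁ : Matrix (Fin n₁) (Fin p) ℝ) (X₂ : Matrix (Fin n₂) (Fin p) ℝ)
    (X : Matrix (Fin n₁ ⊕ Fin n₂) (Fin p) ℝ) (hX : X = Matrix.fromRows X₁ X₂)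
    (hcent : ∀ k, ∑ s, X s k = 0)
    (hinv : IsUnit (Xᵀ * X).det)
    (x₀ : (Fin n₁ ⊕ Fin n₂) → ℝ)
    (hx₀ : x₀ = Sum.elim (fun _ => (n₂ : ℝ) / (n₁ + n₂)) (fun _ => -(n₁ : ℝ) / (n₁ + n₂)))
    (H : Matrix (Fin n₁ ⊕ Fin n₂) (Fin n₁ ⊕ Fin n₂) ℝ)
    (hH : H = X * (Xᵀ * X)⁻¹ * Xᵀ)
    (xbar₁ xbar₂ : Fin p → ℝ)
    (hxbar₁ : xbar₁ = fun k => (∑ j, X₁ j k) / n₁)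
    (hxbar₂ : xbar₂ = fun k => (∑ j, X₂ j k) / n₂) :
    x₀ ⬝ᵥ ((1 - H) *ᵥ x₀) =
      (1 / (n₁ : ℝ) + 1 / (n₂ : ℝ))⁻¹ *
        (1 - (1 / (n₁ : ℝ) + 1 / (n₂ : ℝ))⁻¹ *
          ((xbar₁ - xbar₂) ⬝ᵥ ((Xᵀ * X)⁻¹ *ᵥ (xbar₁ - xbar₂)))) := by
  have : NeZero n₁ := ⟨hn₁.ne'⟩
  have : NeZero n₂ := ⟨hn₂.ne'⟩
  subst hX hx₀ hH hxbar₁ hxbar₂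
  simpa only [centeredGroupIndicator, colMean, Pi.sub_def, Fintype.card_fin] using
    stmt_4_general X₁ X₂ ((fromRows X₁ X₂)ᵀ * fromRows X₁ X₂)⁻¹
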